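/- arXiv:1905.12370 — 4 statements merged into one kernel-verified Lean document; each statement's English description precedes it below -/
import Mathlib

section
/- Let γ ∈ (0,1), let t and B be positive integers with B ≤ t, let α_1, …, α_t ∈ [0,1] satisfy α_s = α_t for every s with t − B < s ≤ t, and let e_1, …, e_t ∈ {0,1}. Define x = Σ_{s=1}^t γ^{t−s}·e_s·α_s and N = Σ_{s=1}^t γ^{t−s}·e_s. Then |x − α_t·N| ≤ γ^B·Σ_{s=1}^{t−B} γ^{(t−B)−s}·e_s ≤ γ^B/(1−γ). -/
/-! The difference `x - α_t N` is `∑ γ^(t-s) e_s (α_s - α_t)`. Its terms vanish on the last `B`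
steps, and each remaining term has `|α_s - α_t| ≤ 1`, while `γ^(t-s) = γ^B γ^(t-B-s)` for
`s ≤ t - B`; this gives the first inequality. The second one is the geometric series bound
`∑ γ^(n-s) ≤ 1/(1-γ)`. -/

theorem discounted_sum_le (γ : ℝ) (hγ0 : 0 < γ) (hγ1 : γ < 1) (n : ℕ) :
    ∑ s ∈ Finset.Icc 1 n, γ ^ (n - s) ≤ 1 / (1 - γ) := by
  have h : ∑ s ∈ Finset.Icc 1 n, γ ^ (n - s) = ∑ k ∈ Finset.range n, γ ^ k := by
    refine Finset.sum_nbij' (fun s => n - s) (fun k => n - k) ?_ ?_ ?_ ?_ ?_ <;>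
      intro s hs <;> simp only [Finset.mem_Icc, Finset.mem_range] at * <;> omega
  rw [h, one_div, ← tsum_geometric_of_lt_one hγ0.le hγ1]
  exact (summable_geometric_of_lt_one hγ0.le hγ1).sum_le_tsum _ (fun k _ => by positivity)

/-- Deterministic bias bound for the discounted empirical
estimator used by CascadeDUCB.  `α s` is the attraction probability of a fixed
item at step `s`, `e s ∈ {0,1}` indicates whether the item was examined at
step `s`; the hypothesis `α s = α t` for `t − B < s ≤ t` says no breakpoint
occurred in the last `B` steps.  With
`x = Σ_{s=1}^t γ^{t−s} e_s α_s` and `N = Σ_{s=1}^t γ^{t−s} e_s` we have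
`|x − α_t·N| ≤ γ^B · Σ_{s=1}^{t−B} γ^{(t−B)−s} e_s ≤ γ^B / (1−γ)`. -/
theorem discounted_estimator_bias_bound (γ : ℝ) (hγ0 : 0 < γ) (hγ1 : γ < 1)
    (t B : ℕ) (ht : 0 < t) (hB : 0 < B) (hBt : B ≤ t)
    (α e : ℕ → ℝ)
    (hα : ∀ s ∈ Finset.Icc 1 t, 0 ≤ α s ∧ α s ≤ 1)
    (he : ∀ s ∈ Finset.Icc 1 t, e s = 0 ∨ e s = 1)
    (hconst : ∀ s, t - B < s → s ≤ t → α s = α t) :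
    |(∑ s ∈ Finset.Icc 1 t, γ ^ (t - s) * e s * α s)
        - α t * ∑ s ∈ Finset.Icc 1 t, γ ^ (t - s) * e s|
      ≤ γ ^ B * ∑ s ∈ Finset.Icc 1 (t - B), γ ^ (t - B - s) * e s
    ∧ γ ^ B * ∑ s ∈ Finset.Icc 1 (t - B), γ ^ (t - B - s) * e s
      ≤ γ ^ B / (1 - γ) := by
  have hsub : Finset.Icc 1 (t - B) ⊆ Finset.Icc 1 t :=
    Finset.Icc_subset_Icc_right (Nat.sub_le t B)
  have he0 : ∀ s ∈ Finset.Icc 1 t, 0 ≤ e s ∧ e s ≤ 1 := by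
    intro s hs
    rcases he s hs with h | h <;> simp [h]
  constructor
  · have hdiff : (∑ s ∈ Finset.Icc 1 t, γ ^ (t - s) * e s * α s)
        - α t * ∑ s ∈ Finset.Icc 1 t, γ ^ (t - s) * e s
        = ∑ s ∈ Finset.Icc 1 (t - B), γ ^ (t - s) * e s * (α s - α t) := by
      rw [Finset.mul_sum, ← Finset.sum_sub_distrib]
      symm
      rw [Finset.sum_subset hsub]
      · exact Finset.sum_congr rfl fun s _ => by ring
      · intro s hs hs'
        simp only [Finset.mem_Icc] at hs hs'
        rw [hconst s (by omega) hs.2, sub_self, mul_zero]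
    rw [hdiff, Finset.mul_sum]
    refine (Finset.abs_sum_le_sum_abs _ _).trans (Finset.sum_le_sum fun s hs => ?_)
    have hst := hsub hs
    have hs2 := (Finset.mem_Icc.mp hs).2
    have hαs := hα s hst
    have hαt := hα t (Finset.mem_Icc.mpr ⟨ht, le_rfl⟩)
    have hw : 0 ≤ γ ^ (t - s) * e s := mul_nonneg (by positivity) (he0 s hst).1
    have habs : |α s - α t| ≤ 1 := abs_le.mpr ⟨by linarith, by linarith⟩
    have hexp : t - s = B + (t - B - s) := by omega
    calc |γ ^ (t - s) * e s * (α s - α t)| = γ ^ (t - s) * e s * |α s - α t| := by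
          rw [abs_mul, abs_of_nonneg hw]
      _ ≤ γ ^ (t - s) * e s := mul_le_of_le_one_right hw habs
      _ = γ ^ B * (γ ^ (t - B - s) * e s) := by rw [hexp, pow_add, mul_assoc]
  · rw [div_eq_mul_one_div]
    refine mul_le_mul_of_nonneg_left ?_ (by positivity)
    refine (Finset.sum_le_sum fun s hs => ?_).trans (discounted_sum_le γ hγ0 hγ1 (t - B))
    exact mul_le_of_le_one_right (by positivity) (he0 s (hsub hs)).2
end

section
/- Let γ ∈ (0,1) and ε ∈ (0,1), and set B = ⌈ln(ε(1−γ))/ln γ⌉. Let t ≥ B be a positive integer, let α_1, …, α_t ∈ [0,1] satisfy α_s = α_t for every s with t − B < s ≤ t, and let e_1, …, e_t ∈ {0,1}. Define x = Σ_{s=1}^t γ^{t−s}·e_s·α_s, N = Σ_{s=1}^t γ^{t−s}·e_s, and the discounted horizon N_t(γ) = (1−γ^t)/(1−γ). If N > 0 and N_t(γ) ≥ e, then |x/N − α_t| ≤ √(ε·ln N_t(γ) / N); that is, the bias of the discounted estimator x/N is at most half the confidence width c_t = 2√(ε·ln N_t(γ)/N) used by CascadeDUCB. -/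
/-!
The argument compares two bounds on the bias `d = |x/N - α_t|`. Only steps at least `B` in the past
can contribute to `x - α_t N`, each by at most `γ ^ (t - s)`, so a geometric tail bound gives
`|x - α_t N| ≤ γ ^ B / (1 - γ)`, and `B` is chosen exactly so that this is at most `ε`
(`pow_window_le`, `abs_discounted_sum_sub_le`). Hence `d ≤ ε / N ≤ ε ln N_t(γ) / N`, using
`N_t(γ) ≥ e`. On the other hand `x/N` is a weighted average of the `α_s`, so `d ≤ 1`. Therefore
`d ^ 2 ≤ d ≤ ε ln N_t(γ) / N`.
-/

/-- After the window length `⌈ln c / ln γ⌉`, the discount factor has dropped to at most `c`. -/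
lemma pow_window_le {γ c : ℝ} (hγ0 : 0 < γ) (hγ1 : γ < 1) (hc : 0 < c) :
    γ ^ (⌈Real.log c / Real.log γ⌉).toNat ≤ c := by
  have hlog : Real.log γ < 0 := Real.log_neg hγ0 hγ1
  have hB : Real.log c / Real.log γ ≤ ((⌈Real.log c / Real.log γ⌉).toNat : ℝ) :=
    (Int.le_ceil _).trans (by exact_mod_cast Int.self_le_toNat _)
  rw [← Real.log_le_log_iff (pow_pos hγ0 _) hc, Real.log_pow]
  exact (div_le_iff_of_neg hlog).1 hB

/-- A discounted sum whose terms are bounded by `1` and vanish on the last `B` steps is bounded by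
the geometric tail `γ ^ B / (1 - γ)`. -/
lemma abs_discounted_sum_sub_le {γ : ℝ} (hγ0 : 0 < γ) (hγ1 : γ < 1) {t B : ℕ} (f : ℕ → ℝ)
    (hf : ∀ s ∈ Finset.Icc 1 t, |f s| ≤ 1) (hzero : ∀ s, t - B < s → s ≤ t → f s = 0) :
    |∑ s ∈ Finset.Icc 1 t, γ ^ (t - s) * f s| ≤ γ ^ B / (1 - γ) := by
  calc |∑ s ∈ Finset.Icc 1 t, γ ^ (t - s) * f s|
      ≤ ∑ s ∈ Finset.Icc 1 t, |γ ^ (t - s) * f s| := Finset.abs_sum_le_sum_abs _ _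
    _ ≤ ∑ s ∈ Finset.Icc 1 t, if B ≤ t - s then γ ^ (t - s) else 0 := by
        refine Finset.sum_le_sum fun s hs => ?_
        have hs' := Finset.mem_Icc.1 hs
        split_ifs with h
        · rw [abs_mul, abs_of_pos (pow_pos hγ0 _)]
          exact mul_le_of_le_one_right (pow_pos hγ0 _).le (hf s hs)
        · rw [hzero s (by omega) hs'.2]; simp
    _ = ∑ s ∈ Finset.Icc 1 t with B ≤ t - s, γ ^ (t - s) := (Finset.sum_filter _ _).symm
    _ = ∑ k ∈ Finset.Ico B t, γ ^ k := by
        refine Finset.sum_nbij' (fun s => t - s) (fun k => t - k) ?_ ?_ ?_ ?_ fun _ _ => rfl <;>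
          · intro a ha
            simp only [Finset.mem_filter, Finset.mem_Icc, Finset.mem_Ico] at ha ⊢
            omega
    _ ≤ γ ^ B / (1 - γ) := geom_sum_Ico_le_of_lt_one hγ0.le hγ1


/-- Combining the bias bound for discounted estimators with
the choice `B = ⌈ln(ε(1−γ)) / ln γ⌉`: if no breakpoint occurred in the last
`B` steps, `N > 0` and the discounted horizon `N_t(γ) = (1−γ^t)/(1−γ)` is at
least `e`, then the bias of the discounted estimator `x/N` is at most half the
confidence width `c_t = 2√(ε ln N_t(γ) / N)` used by CascadeDUCB:
`|x/N − α_t| ≤ √(ε ln N_t(γ) / N)`. -/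
theorem discounted_estimator_bias_le_half_width (γ ε : ℝ)
    (hγ0 : 0 < γ) (hγ1 : γ < 1) (hε0 : 0 < ε) (hε1 : ε < 1)
    (t : ℕ) (ht : 0 < t)
    (hBt : (⌈Real.log (ε * (1 - γ)) / Real.log γ⌉).toNat ≤ t)
    (α e : ℕ → ℝ)
    (hα : ∀ s ∈ Finset.Icc 1 t, 0 ≤ α s ∧ α s ≤ 1)
    (he : ∀ s ∈ Finset.Icc 1 t, e s = 0 ∨ e s = 1)
    (hconst : ∀ s, t - (⌈Real.log (ε * (1 - γ)) / Real.log γ⌉).toNat < s → s ≤ t →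
      α s = α t)
    (hN : 0 < ∑ s ∈ Finset.Icc 1 t, γ ^ (t - s) * e s)
    (hNh : Real.exp 1 ≤ (1 - γ ^ t) / (1 - γ)) :
    |(∑ s ∈ Finset.Icc 1 t, γ ^ (t - s) * e s * α s)
        / (∑ s ∈ Finset.Icc 1 t, γ ^ (t - s) * e s) - α t|
      ≤ Real.sqrt (ε * Real.log ((1 - γ ^ t) / (1 - γ))
          / ∑ s ∈ Finset.Icc 1 t, γ ^ (t - s) * e s) := by
  have hγ' : 0 < 1 - γ := sub_pos.2 hγ1
  have hαt := hα t (Finset.mem_Icc.2 ⟨ht, le_rfl⟩)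
  have hpow := pow_window_le hγ0 hγ1 (mul_pos hε0 hγ')
  set B := (⌈Real.log (ε * (1 - γ)) / Real.log γ⌉).toNat
  set N := ∑ s ∈ Finset.Icc 1 t, γ ^ (t - s) * e s with hNdef
  set x := ∑ s ∈ Finset.Icc 1 t, γ ^ (t - s) * e s * α s with hxdef
  have hdev : ∀ s ∈ Finset.Icc 1 t, |α s - α t| ≤ 1 := fun s hs => by
    have := hα s hs
    exact abs_le.2 ⟨by linarith, by linarith⟩
  have hx : x - α t * N = ∑ s ∈ Finset.Icc 1 t, γ ^ (t - s) * (e s * (α s - α t)) := by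
    rw [hxdef, hNdef, Finset.mul_sum, ← Finset.sum_sub_distrib]
    exact Finset.sum_congr rfl fun s _ => by ring
  have hε : |x - α t * N| ≤ ε := by
    rw [hx]
    refine (abs_discounted_sum_sub_le (B := B) hγ0 hγ1 _ (fun s hs => ?_)
      fun s h₁ h₂ => ?_).trans ((div_le_iff₀ hγ').2 hpow)
    · rcases he s hs with h | h
      · simp [h]
      · simpa [h] using hdev s hs
    · rw [hconst s h₁ h₂]; simp
  have hle : |x - α t * N| ≤ N := by
    rw [hx, hNdef]
    refine (Finset.abs_sum_le_sum_abs _ _).trans (Finset.sum_le_sum fun s hs => ?_)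
    have hp := (pow_pos hγ0 (t - s)).le
    rw [abs_mul, abs_of_nonneg hp]
    refine mul_le_mul_of_nonneg_left ?_ hp
    rcases he s hs with h | h
    · simp [h]
    · simpa [h] using hdev s hs
  have hd : |x / N - α t| = |x - α t * N| / N := by
    rw [div_sub' hN.ne', abs_div, abs_of_pos hN, mul_comm N]
  have hlog : 1 ≤ Real.log ((1 - γ ^ t) / (1 - γ)) :=
    (Real.le_log_iff_exp_le ((Real.exp_pos 1).trans_le hNh)).2 hNh
  have hd1 : |x / N - α t| ≤ 1 := by rw [hd]; exact (div_le_one hN).2 hle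
  have hdε : |x / N - α t| ≤ ε * Real.log ((1 - γ ^ t) / (1 - γ)) / N := by
    rw [hd]
    gcongr
    exact hε.trans (le_mul_of_one_le_right hε0.le hlog)
  exact Real.le_sqrt_of_sq_le ((pow_le_of_le_one (abs_nonneg _) hd1 two_ne_zero).trans hdε)
end

section
/- Let γ ∈ (0,1), η > 0, and let n ≥ t₀ := ⌈1/(1−γ)⌉ be an integer. With N_t(γ) = (1−γ^t)/(1−γ), one has Σ_{t=t₀}^n ⌈ln N_t(γ) / ln(1+η)⌉ / N_t(γ) ≤ n·(1−γ)/(1 − 1/e) · ⌈ln(1/(1−γ)) / ln(1+η)⌉. -/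
/-!
Write `q = 1 - γ`. From `γ ≤ exp (-q)` one gets `γ ^ t ≤ exp (-q t) ≤ exp (-1)` once `q t ≥ 1`, so
the denominator satisfies `N_t ≥ (1 - 1/e) / q`, while `N_t ≤ 1 / q` bounds the ceiling by
monotonicity. Every summand is therefore at most `q / (1 - 1/e) * ⌈log (1/q) / log (1 + η)⌉`, and
there are at most `n` of them since the sum starts at an index that is at least `1`.
-/

lemma pow_le_exp_neg_one {γ : ℝ} (hγ0 : 0 < γ) {t : ℕ} (ht : 1 ≤ (1 - γ) * t) :
    γ ^ t ≤ 1 / Real.exp 1 := by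
  have h1 : γ ≤ Real.exp (γ - 1) := by linarith [Real.add_one_le_exp (γ - 1)]
  calc γ ^ t ≤ Real.exp (γ - 1) ^ t := pow_le_pow_left₀ hγ0.le h1 t
    _ = Real.exp (t * (γ - 1)) := (Real.exp_nat_mul _ _).symm
    _ ≤ Real.exp (-1) := Real.exp_le_exp.2 (by linarith)
    _ = 1 / Real.exp 1 := by rw [Real.exp_neg, one_div]

/-- Deterministic summation bound from Step 2 of the
CascadeDUCB regret analysis.  With `N_t(γ) = (1−γ^t)/(1−γ)` and
`t₀ = ⌈1/(1−γ)⌉`, for any `η > 0` and any integer `n ≥ t₀`,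
`Σ_{t=t₀}^n ⌈ln N_t(γ)/ln(1+η)⌉ / N_t(γ)
  ≤ n(1−γ)/(1 − 1/e) · ⌈ln(1/(1−γ))/ln(1+η)⌉`. -/
theorem ducb_confidence_sum_bound (γ η : ℝ) (hγ0 : 0 < γ) (hγ1 : γ < 1)
    (hη : 0 < η) (n : ℕ) (hn : ⌈1 / (1 - γ)⌉₊ ≤ n) :
    ∑ t ∈ Finset.Icc ⌈1 / (1 - γ)⌉₊ n,
        (⌈Real.log ((1 - γ ^ t) / (1 - γ)) / Real.log (1 + η)⌉ : ℝ)
          / ((1 - γ ^ t) / (1 - γ))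
      ≤ (n : ℝ) * (1 - γ) / (1 - 1 / Real.exp 1)
          * (⌈Real.log (1 / (1 - γ)) / Real.log (1 + η)⌉ : ℝ) := by
  have hq : 0 < 1 - γ := sub_pos.2 hγ1
  have he : 0 < 1 - 1 / Real.exp 1 := by
    rw [sub_pos, div_lt_one (Real.exp_pos 1)]
    exact Real.one_lt_exp_iff.2 one_pos
  have hL : 0 < Real.log (1 + η) := Real.log_pos (by linarith)
  have hq1 : 1 ≤ 1 / (1 - γ) := by
    rw [le_div_iff₀ hq]
    linarith
  have ht0 : 1 ≤ ⌈1 / (1 - γ)⌉₊ := Nat.one_le_ceil_iff.2 (by positivity)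
  set C : ℤ := ⌈Real.log (1 / (1 - γ)) / Real.log (1 + η)⌉ with hC
  have hC0 : (0 : ℝ) ≤ C := by
    exact_mod_cast Int.ceil_nonneg (div_nonneg (Real.log_nonneg hq1) hL.le)
  have hterm : ∀ t ∈ Finset.Icc ⌈1 / (1 - γ)⌉₊ n,
      (⌈Real.log ((1 - γ ^ t) / (1 - γ)) / Real.log (1 + η)⌉ : ℝ) / ((1 - γ ^ t) / (1 - γ))
        ≤ (1 - γ) / (1 - 1 / Real.exp 1) * C := by
    intro t ht
    have ht' : 1 / (1 - γ) ≤ t := Nat.ceil_le.1 (Finset.mem_Icc.1 ht).1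
    have hpow : γ ^ t ≤ 1 / Real.exp 1 :=
      pow_le_exp_neg_one hγ0 ((div_le_iff₀' hq).1 ht')
    have hlow : (1 - 1 / Real.exp 1) / (1 - γ) ≤ (1 - γ ^ t) / (1 - γ) :=
      div_le_div_of_nonneg_right (by linarith) hq.le
    have hlow0 : 0 < (1 - 1 / Real.exp 1) / (1 - γ) := div_pos he hq
    have hN : 0 < (1 - γ ^ t) / (1 - γ) := hlow0.trans_le hlow
    have hup : (1 - γ ^ t) / (1 - γ) ≤ 1 / (1 - γ) :=
      div_le_div_of_nonneg_right (by linarith [pow_pos hγ0 t]) hq.le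
    have hceil : ⌈Real.log ((1 - γ ^ t) / (1 - γ)) / Real.log (1 + η)⌉ ≤ C :=
      Int.ceil_le_ceil (div_le_div_of_nonneg_right (Real.log_le_log hN hup) hL.le)
    calc _ ≤ (C : ℝ) / ((1 - γ ^ t) / (1 - γ)) :=
          div_le_div_of_nonneg_right (by exact_mod_cast hceil) hN.le
      _ ≤ C / ((1 - 1 / Real.exp 1) / (1 - γ)) := div_le_div_of_nonneg_left hC0 hlow0 hlow
      _ = (1 - γ) / (1 - 1 / Real.exp 1) * C := by rw [div_div_eq_mul_div]; ring
  have hcard : ((Finset.Icc ⌈1 / (1 - γ)⌉₊ n).card : ℝ) ≤ n := by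
    rw [Nat.card_Icc]
    exact_mod_cast (by omega : n + 1 - ⌈1 / (1 - γ)⌉₊ ≤ n)
  calc _ ≤ ((Finset.Icc ⌈1 / (1 - γ)⌉₊ n).card : ℝ) * ((1 - γ) / (1 - 1 / Real.exp 1) * C) := by
        simpa only [nsmul_eq_mul] using Finset.sum_le_card_nsmul _ _ _ hterm
    _ ≤ n * ((1 - γ) / (1 - 1 / Real.exp 1) * C) :=
        mul_le_mul_of_nonneg_right hcard (mul_nonneg (div_pos hq he).le hC0)
    _ = n * (1 - γ) / (1 - 1 / Real.exp 1) * C := by ring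
end

section
/- Let K ≥ 1 be an integer and let Δ_1 ≥ Δ_2 ≥ ⋯ ≥ Δ_K > 0 be reals. Then 1/Δ_1 + Σ_{k=2}^K Δ_k·(1/Δ_k² − 1/Δ_{k−1}²) ≤ 2/Δ_K. -/
/-!
Each summand satisfies `Δ_k (1/Δ_k² − 1/Δ_{k−1}²) ≤ 2/Δ_k − 2/Δ_{k−1}` (`gap_step`), because the
difference of the two sides is `Δ_k (1/Δ_k − 1/Δ_{k−1})² ≥ 0`. Summing, the right-hand
sides telescope, and the initial term is absorbed by `1/Δ_1 ≤ 2/Δ_1`.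
-/

lemma gap_step {x y : ℝ} (hx : 0 < x) (hy : 0 < y) :
    y * (1 / y ^ 2 - 1 / x ^ 2) ≤ 2 / y - 2 / x := by
  have h : 2 / y - 2 / x - y * (1 / y ^ 2 - 1 / x ^ 2) = y * (1 / y - 1 / x) ^ 2 := by
    field_simp
    ring
  have h' : 0 ≤ y * (1 / y - 1 / x) ^ 2 := by positivity
  linarith

/-- Telescoping inequality over a nonincreasing sequence of
positive gaps `Δ_1 ≥ Δ_2 ≥ ⋯ ≥ Δ_K > 0`:
`1/Δ_1 + Σ_{k=2}^K Δ_k (1/Δ_k² − 1/Δ_{k−1}²) ≤ 2/Δ_K`. -/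
theorem gap_telescoping_bound (K : ℕ) (hK : 1 ≤ K) (Δ : ℕ → ℝ)
    (hpos : ∀ k ∈ Finset.Icc 1 K, 0 < Δ k)
    (hmono : ∀ j k, 1 ≤ j → j ≤ k → k ≤ K → Δ k ≤ Δ j) :
    1 / Δ 1 + ∑ k ∈ Finset.Icc 2 K, Δ k * (1 / Δ k ^ 2 - 1 / Δ (k - 1) ^ 2)
      ≤ 2 / Δ K := by
  clear hmono
  induction K, hK using Nat.le_induction with
  | base =>
    have h1 : 0 < Δ 1 := hpos 1 (by simp)
    have h2 : 1 / Δ 1 ≤ 2 / Δ 1 := by gcongr; norm_num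
    simpa using h2
  | succ n hn ih =>
    have hrec := ih fun k hk => hpos k (by simp only [Finset.mem_Icc] at hk ⊢; omega)
    have hstep := gap_step (hpos n (by simp only [Finset.mem_Icc]; omega))
      (hpos (n + 1) (by simp only [Finset.mem_Icc]; omega))
    rw [Finset.sum_Icc_succ_top (by omega), Nat.add_sub_cancel]
    linarith
end
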